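/- A finitely additive measure μ on the positive integers is a density measure if and only if it is 𝒢-invariant, i.e., μ(A) = μ(πA) for every A ⊆ ℕ and every permutation π in the Lévy group 𝒢. -/

import Mathlib

open Filter Topology

/-- The counting function `A(n) = |A ∩ [1, n]|`, as a real number. -/
noncomputable def count (A : Set ℕ) (n : ℕ) : ℝ :=
  ((A ∩ Set.Icc 1 n).ncard : ℝ)

/-- `A ⊆ ℕ` has asymptotic density `a`, i.e. `A(n)/n → a`. -/
def HasDensity (A : Set ℕ) (a : ℝ) : Prop :=
  Filter.Tendsto (fun n : ℕ => count A n / n) Filter.atTop (nhds a)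

/-- Membership of a permutation `π` of `ℕ` in the Lévy group `𝒢`:
`|{k : k ≤ n < π(k)}| / n → 0`. -/
def InLevyGroup (π : Equiv.Perm ℕ) : Prop :=
  Filter.Tendsto
    (fun n : ℕ => (({k : ℕ | k ≤ n ∧ n < π k}.ncard : ℝ) / n))
    Filter.atTop (nhds 0)

/-- A finitely additive probability measure defined on all subsets of `ℕ`,
with values in `[0, 1]`. -/
def IsFAMeasure (μ : Set ℕ → ℝ) : Prop :=
  (∀ A : Set ℕ, 0 ≤ μ A) ∧ (∀ A : Set ℕ, μ A ≤ 1) ∧ μ Set.univ = 1 ∧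
    ∀ A B : Set ℕ, Disjoint A B → μ (A ∪ B) = μ A + μ B

/-- A density measure: a finitely additive measure extending asymptotic density. -/
def IsDensityMeasure (μ : Set ℕ → ℝ) : Prop :=
  IsFAMeasure μ ∧ ∀ (A : Set ℕ) (a : ℝ), HasDensity A a → μ A = a

/-- Statistical convergence of a real sequence `x` to `L`: for every `ε > 0`
the set `{n : |x n − L| ≥ ε}` has asymptotic density zero. -/
def StatTendsto (x : ℕ → ℝ) (L : ℝ) : Prop :=
  ∀ ε : ℝ, 0 < ε → HasDensity {n : ℕ | ε ≤ |x n - L|} 0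

/-- The limit of a (bounded) real sequence along an ultrafilter on `ℕ`. -/
noncomputable def ulim (𝒰 : Ultrafilter ℕ) (x : ℕ → ℝ) : ℝ :=
  limUnder (𝒰 : Filter ℕ) x

/-!
A permutation in the Lévy group changes a counting function by `o(n)` only. So for a density measure
`μ` it suffices that `μ A = μ B` whenever the counting functions of `A` and `B` differ by `o(n)`.
Discarding `A ∩ B`, we may take `A` and `B` disjoint; if `T` is a set containing every other element
of the complement of `A ∪ B`, then `A ∪ T` and `B ∪ T` both have density `1 / 2`, and `μ T` cancels.

Conversely, let `A` and `B` have the same density `a`, with `0 < a < 1`. The permutation that maps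
`A` onto `B` and `Aᶜ` onto `Bᶜ`, increasingly on each, lies in the Lévy group, so an invariant `μ`
takes the same value at `A` and `B`. Cutting sets into pieces of density `1 / N` gives `μ A = a` for
rational `a`; by monotonicity `μ A ≤ a` for every `A` of density `a`, and the complement of `A`
yields the other inequality.
-/

lemma count_nonneg (A : Set ℕ) (n : ℕ) : 0 ≤ count A n :=
  Nat.cast_nonneg _

lemma count_zero (A : Set ℕ) : count A 0 = 0 := by
  simp [count]

lemma count_univ (n : ℕ) : count Set.univ n = n := by
  simp [count, Set.ncard_eq_toFinset_card']

lemma count_succ_of_mem {A : Set ℕ} {n : ℕ} (hn : n + 1 ∈ A) :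
    count A (n + 1) = count A n + 1 := by
  have hnot : n + 1 ∉ A ∩ Set.Icc 1 n := by simp
  rw [count, count, ← Set.insert_Icc_right_eq_Icc_add_one (by lia), Set.inter_insert_of_mem hn,
    Set.ncard_insert_of_notMem hnot, Nat.cast_add_one]

lemma count_succ_of_notMem {A : Set ℕ} {n : ℕ} (hn : n + 1 ∉ A) :
    count A (n + 1) = count A n := by
  rw [count, count, ← Set.insert_Icc_right_eq_Icc_add_one (by lia),
    Set.inter_insert_of_notMem hn]

lemma count_union {A B : Set ℕ} (hAB : Disjoint A B) (n : ℕ) :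
    count (A ∪ B) n = count A n + count B n := by
  rw [count, Set.union_inter_distrib_right,
    Set.ncard_union_eq (hAB.mono Set.inter_subset_left Set.inter_subset_left), Nat.cast_add]
  rfl

lemma count_add_count_sdiff {A B : Set ℕ} (h : A ⊆ B) (n : ℕ) :
    count A n + count (B \ A) n = count B n := by
  rw [← count_union Set.disjoint_sdiff_right, Set.union_sdiff_cancel h]

lemma count_add_count_compl (A : Set ℕ) (n : ℕ) : count A n + count Aᶜ n = n := by
  rw [Set.compl_eq_univ_sdiff, count_add_count_sdiff (Set.subset_univ A), count_univ]

lemma count_inter_add_count_sdiff (A B : Set ℕ) (n : ℕ) :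
    count (A ∩ B) n + count (A \ B) n = count A n := by
  rw [← Set.sdiff_self_inter, count_add_count_sdiff Set.inter_subset_left]

lemma count_le_ncard {A : Set ℕ} (hA : A.Finite) (n : ℕ) : count A n ≤ A.ncard :=
  Nat.cast_le.mpr (Set.ncard_le_ncard Set.inter_subset_left hA)

lemma ncard_inter_Iic_le (A : Set ℕ) (n : ℕ) : ((A ∩ Set.Iic n).ncard : ℝ) ≤ count A n + 1 := by
  have hsub : A ∩ Set.Iic n ⊆ insert 0 (A ∩ Set.Icc 1 n) := by
    rintro x ⟨hxA, hxn⟩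
    rcases Nat.eq_zero_or_pos x with hx | hx
    exacts [Or.inl hx, Or.inr ⟨hxA, hx, hxn⟩]
  rw [count]
  exact mod_cast (Set.ncard_le_ncard hsub).trans (Set.ncard_insert_le 0 _)

lemma isLittleO_const_natCast (C : ℝ) :
    (fun _ : ℕ => C) =o[atTop] ((↑) : ℕ → ℝ) :=
  (Asymptotics.isLittleO_const_id_atTop C).natCast_atTop

lemma isLittleO_natCast_iff {u : ℕ → ℝ} :
    u =o[atTop] ((↑) : ℕ → ℝ) ↔ Tendsto (fun n : ℕ => u n / n) atTop (𝓝 0) := by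
  refine Asymptotics.isLittleO_iff_tendsto' ?_
  filter_upwards [eventually_ne_atTop 0] with n hn h
  exact absurd (Nat.cast_eq_zero.mp h) hn

lemma hasDensity_iff_isLittleO {A : Set ℕ} {a : ℝ} :
    HasDensity A a ↔ (fun n : ℕ => count A n - a * n) =o[atTop] ((↑) : ℕ → ℝ) := by
  rw [isLittleO_natCast_iff, HasDensity, ← tendsto_sub_nhds_zero_iff]
  refine tendsto_congr' ?_
  filter_upwards [eventually_ne_atTop 0] with n hn
  rw [sub_div, mul_div_cancel_right₀ a (Nat.cast_ne_zero.mpr hn)]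

lemma hasDensity_univ : HasDensity Set.univ 1 := by
  simp [hasDensity_iff_isLittleO, count_univ]

lemma hasDensity_zero_of_finite {A : Set ℕ} (hA : A.Finite) : HasDensity A 0 := by
  refine hasDensity_iff_isLittleO.mpr <|
    (Asymptotics.IsBigO.of_norm_le fun n => ?_).trans_isLittleO (isLittleO_const_natCast A.ncard)
  rw [zero_mul, sub_zero, Real.norm_of_nonneg (count_nonneg A n)]
  exact count_le_ncard hA n

namespace HasDensity

variable {A B : Set ℕ} {a b : ℝ}

lemma nonneg (hA : HasDensity A a) : 0 ≤ a :=
  ge_of_tendsto' hA fun n => div_nonneg (count_nonneg A n) n.cast_nonneg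

lemma infinite (hA : HasDensity A a) (ha : a ≠ 0) : A.Infinite :=
  fun hfin => ha (tendsto_nhds_unique hA (hasDensity_zero_of_finite hfin))

lemma sdiff (hB : HasDensity B b) (hA : HasDensity A a) (h : A ⊆ B) :
    HasDensity (B \ A) (b - a) := by
  rw [hasDensity_iff_isLittleO] at hA hB ⊢
  refine (hB.sub hA).congr_left fun n => ?_
  linear_combination -count_add_count_sdiff h n

lemma compl (hA : HasDensity A a) : HasDensity Aᶜ (1 - a) := by
  rw [Set.compl_eq_univ_sdiff]
  exact hasDensity_univ.sdiff hA (Set.subset_univ A)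

end HasDensity

lemma exists_subset_count_eq_floor (A : Set ℕ) {t : ℝ} (ht0 : 0 ≤ t) (ht1 : t ≤ 1) :
    ∃ T ⊆ A, ∀ n, count T n = ⌊t * count A n⌋₊ := by
  -- `T` keeps the elements of `A` at which `⌊t * count A ·⌋₊` jumps; as `t ≤ 1`, it jumps by one.
  let T : Set ℕ := {x ∈ A | ⌊t * count A (x - 1)⌋₊ < ⌊t * count A x⌋₊}
  refine ⟨T, Set.sep_subset _ _, fun n => ?_⟩
  induction n with
  | zero => simp [count_zero]
  | succ n ih =>
    by_cases hA : n + 1 ∈ A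
    · have hmono : ⌊t * count A n⌋₊ ≤ ⌊t * count A (n + 1)⌋₊ := by
        rw [count_succ_of_mem hA]
        gcongr
        linarith
      have hjump : ⌊t * count A (n + 1)⌋₊ ≤ ⌊t * count A n⌋₊ + 1 := by
        rw [← Nat.floor_add_one (mul_nonneg ht0 (count_nonneg A n)), count_succ_of_mem hA]
        gcongr
        linarith
      by_cases hlt : ⌊t * count A n⌋₊ < ⌊t * count A (n + 1)⌋₊
      · have hT : n + 1 ∈ T := ⟨hA, hlt⟩
        rw [count_succ_of_mem hT, ih, hjump.antisymm hlt, Nat.cast_add_one]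
      · have hT : n + 1 ∉ T := fun h => hlt h.2
        rw [count_succ_of_notMem hT, ih, hmono.antisymm (not_lt.mp hlt)]
    · have hT : n + 1 ∉ T := fun h => hA h.1
      rw [count_succ_of_notMem hT, count_succ_of_notMem hA, ih]

lemma exists_subset_count_sub_mul_isLittleO (A : Set ℕ) {t : ℝ} (ht0 : 0 ≤ t) (ht1 : t ≤ 1) :
    ∃ T ⊆ A, (fun n => count T n - t * count A n) =o[atTop] ((↑) : ℕ → ℝ) := by
  obtain ⟨T, hTA, hT⟩ := exists_subset_count_eq_floor A ht0 ht1
  refine ⟨T, hTA,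
    (Asymptotics.IsBigO.of_norm_le fun n => ?_).trans_isLittleO (isLittleO_const_natCast 1)⟩
  rw [hT, Real.norm_eq_abs, abs_sub_comm]
  exact Nat.abs_sub_floor_le (mul_nonneg ht0 (count_nonneg A n))

namespace HasDensity

variable {A : Set ℕ} {a b : ℝ}

lemma exists_subset (hA : HasDensity A a) (hb : 0 ≤ b) (hba : b ≤ a) :
    ∃ T ⊆ A, HasDensity T b := by
  obtain ⟨T, hTA, hT⟩ := exists_subset_count_sub_mul_isLittleO A (div_nonneg hb hA.nonneg)
    (div_le_one_of_le₀ hba hA.nonneg)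
  refine ⟨T, hTA, hasDensity_iff_isLittleO.mpr ?_⟩
  have hab : b / a * a = b := div_mul_cancel_of_imp fun ha => hb.antisymm' (ha ▸ hba)
  refine (hT.add ((hasDensity_iff_isLittleO.mp hA).const_mul_left (b / a))).congr_left fun n => ?_
  linear_combination -(n : ℝ) * hab

lemma exists_superset (hA : HasDensity A a) (hab : a ≤ b) (hb : b ≤ 1) :
    ∃ B, A ⊆ B ∧ HasDensity B b := by
  obtain ⟨T, hTA, hT⟩ := hA.compl.exists_subset (sub_nonneg.mpr hb) (sub_le_sub_left hab 1)
  exact ⟨Tᶜ, Set.subset_compl_comm.mp hTA, by simpa only [sub_sub_cancel] using hT.compl⟩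

end HasDensity

/-- Two sets are asymptotically equal when their counting functions differ by `o(n)`. Sets with the
same density are, and so are `A` and `π '' A` for `π` in the Lévy group. -/
def AsympEqual (A B : Set ℕ) : Prop :=
  (fun n => count A n - count B n) =o[atTop] ((↑) : ℕ → ℝ)

lemma HasDensity.asympEqual {A B : Set ℕ} {a : ℝ} (hA : HasDensity A a) (hB : HasDensity B a) :
    AsympEqual A B :=
  ((hasDensity_iff_isLittleO.mp hA).sub (hasDensity_iff_isLittleO.mp hB)).congr_left
    fun n => by ring

lemma AsympEqual.sdiff {A B : Set ℕ} (h : AsympEqual A B) : AsympEqual (A \ B) (B \ A) := by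
  refine h.congr_left fun n => ?_
  rw [← count_inter_add_count_sdiff A B, ← count_inter_add_count_sdiff B A, Set.inter_comm B A,
    add_sub_add_left_eq_sub]

lemma AsympEqual.exists_hasDensity_half_union {A B : Set ℕ} (h : AsympEqual A B)
    (hAB : Disjoint A B) :
    ∃ T, Disjoint (A ∪ B) T ∧ HasDensity (A ∪ T) (1 / 2) ∧ HasDensity (B ∪ T) (1 / 2) := by
  obtain ⟨T, hT, hTo⟩ := exists_subset_count_sub_mul_isLittleO (A ∪ B)ᶜ (t := 1 / 2) (by norm_num)
    (by norm_num)
  have hdisj : Disjoint (A ∪ B) T := disjoint_compl_right.mono_right hT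
  obtain ⟨hAT, hBT⟩ := Set.disjoint_union_left.mp hdisj
  have hsum (n : ℕ) : count A n + count B n + count (A ∪ B)ᶜ n = n := by
    rw [← count_union hAB, count_add_count_compl]
  have hhalf : (fun n => (1 / 2 : ℝ) * (count A n - count B n)) =o[atTop] ((↑) : ℕ → ℝ) :=
    h.const_mul_left _
  refine ⟨T, hdisj, hasDensity_iff_isLittleO.mpr ((hTo.add hhalf).congr_left fun n => ?_),
    hasDensity_iff_isLittleO.mpr ((hTo.sub hhalf).congr_left fun n => ?_)⟩
  · linear_combination -count_union hAT n - hsum n / 2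
  · linear_combination -count_union hBT n - hsum n / 2

/-- The indices `k ≤ n` with `f k > n`. A permutation `π` lies in the Lévy group when
`crossing π n` has `o(n)` elements. -/
def crossing (f : ℕ → ℕ) (n : ℕ) : Set ℕ :=
  {k | k ≤ n ∧ n < f k}

lemma finite_crossing (f : ℕ → ℕ) (n : ℕ) : (crossing f n).Finite :=
  (Set.finite_Iic n).subset fun _ hk => hk.1

lemma inLevyGroup_iff_isLittleO {π : Equiv.Perm ℕ} :
    InLevyGroup π ↔ (fun n => ((crossing π n).ncard : ℝ)) =o[atTop] ((↑) : ℕ → ℝ) :=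
  isLittleO_natCast_iff.symm

lemma count_le_count_image_add {A : Set ℕ} {f : ℕ → ℕ} (hf : Set.InjOn f A) (n : ℕ) :
    count A n ≤ count (f '' A) n + ((crossing f n).ncard + 1) := by
  let S : Set ℕ := (A ∩ Set.Icc 1 n) \ crossing f n
  have hSA : S ⊆ A := fun k hk => hk.1.1
  have himage : f '' S ⊆ f '' A ∩ Set.Iic n := by
    rintro _ ⟨k, hk, rfl⟩
    exact ⟨Set.mem_image_of_mem f (hSA hk), not_lt.mp fun hlt => hk.2 ⟨hk.1.2.2, hlt⟩⟩
  calc count A n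
      ≤ S.ncard + (crossing f n).ncard := by
        rw [count]
        exact mod_cast Set.ncard_le_ncard_sdiff_add_ncard _ _ (finite_crossing f n)
    _ = (f '' S).ncard + (crossing f n).ncard := by rw [(hf.mono hSA).ncard_image]
    _ ≤ (f '' A ∩ Set.Iic n).ncard + (crossing f n).ncard := by
        gcongr
        exact (Set.finite_Iic n).inter_of_right _
    _ ≤ count (f '' A) n + ((crossing f n).ncard + 1) := by
        linarith [ncard_inter_Iic_le (f '' A) n]

lemma abs_count_sub_count_image_le (π : Equiv.Perm ℕ) (A : Set ℕ) (n : ℕ) :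
    |count A n - count (π '' A) n| ≤ (crossing π n).ncard + 1 := by
  have hA := count_le_count_image_add (A := A) π.injective.injOn n
  have hAc := count_le_count_image_add (A := Aᶜ) π.injective.injOn n
  rw [Set.image_compl_eq π.bijective] at hAc
  rw [abs_le]
  constructor <;> linarith [count_add_count_compl A n, count_add_count_compl (π '' A) n]

lemma InLevyGroup.asympEqual_image {π : Equiv.Perm ℕ} (hπ : InLevyGroup π) (A : Set ℕ) :
    AsympEqual A (π '' A) :=
  (Asymptotics.IsBigO.of_norm_le (abs_count_sub_count_image_le π A)).trans_isLittleO
    ((inLevyGroup_iff_isLittleO.mp hπ).add (isLittleO_const_natCast 1))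

lemma ncard_crossing_inter_le {A : Set ℕ} {f : ℕ → ℕ} (hf : MonotoneOn f A) (n : ℕ) :
    ((crossing f n ∩ A).ncard : ℝ) ≤ |count A n - count (f '' A) n| + 1 := by
  rcases (crossing f n ∩ A).eq_empty_or_nonempty with hempty | ⟨k, ⟨hkn, hnk⟩, hkA⟩
  · rw [hempty, Set.ncard_empty, Nat.cast_zero]
    positivity
  -- By monotonicity the crossing `k` keeps every element of `A` above `n` from landing in `[1, n]`.
  have himage : f '' A ∩ Set.Icc 1 n ⊆ f '' ((A ∩ Set.Iic n) \ (crossing f n ∩ A)) := by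
    rintro _ ⟨⟨x, hxA, rfl⟩, -, hx⟩
    have hxn : x ≤ n := not_lt.mp fun hlt =>
      (hnk.trans_le (hf hkA hxA (hkn.trans hlt.le))).not_ge hx
    exact ⟨x, ⟨⟨hxA, hxn⟩, fun h => h.1.2.not_ge hx⟩, rfl⟩
  have hfin : (A ∩ Set.Iic n).Finite := (Set.finite_Iic n).inter_of_right A
  have hcard : count (f '' A) n ≤ ((A ∩ Set.Iic n) \ (crossing f n ∩ A)).ncard :=
    Nat.cast_le.mpr <| (Set.ncard_le_ncard himage (hfin.sdiff.image f)).trans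
      (Set.ncard_image_le hfin.sdiff)
  have hsplit : (((A ∩ Set.Iic n) \ (crossing f n ∩ A)).ncard : ℝ) + (crossing f n ∩ A).ncard =
      (A ∩ Set.Iic n).ncard :=
    mod_cast Set.ncard_sdiff_add_ncard_of_subset
      (fun _ hx => ⟨hx.2, hx.1.1⟩) hfin
  linarith [ncard_inter_Iic_le A n, le_abs_self (count A n - count (f '' A) n)]

lemma ncard_crossing_le {π : Equiv.Perm ℕ} {A : Set ℕ} (hA : MonotoneOn π A)
    (hAc : MonotoneOn π Aᶜ) (n : ℕ) :
    ((crossing π n).ncard : ℝ) ≤ 2 * |count A n - count (π '' A) n| + 2 := by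
  have hcompl : |count Aᶜ n - count (π '' Aᶜ) n| = |count A n - count (π '' A) n| := by
    rw [Set.image_compl_eq π.bijective, abs_sub_comm (count A n)]
    congr 1
    linear_combination count_add_count_compl A n - count_add_count_compl (π '' A) n
  have hsplit : ((crossing π n).ncard : ℝ) ≤
      (crossing π n ∩ A).ncard + (crossing π n ∩ Aᶜ).ncard := by
    rw [← Nat.cast_add, Nat.cast_le]
    conv_lhs => rw [← Set.inter_union_compl (crossing π n) A]
    exact Set.ncard_union_le _ _
  linarith [ncard_crossing_inter_le hA n, ncard_crossing_inter_le hAc n]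

lemma exists_perm_image_eq_monotoneOn {α : Type*} [Preorder α] {A B : Set α} (e : A ≃o B)
    (f : ↥Aᶜ ≃o ↥Bᶜ) :
    ∃ π : Equiv.Perm α, π '' A = B ∧ MonotoneOn π A ∧ MonotoneOn π Aᶜ := by
  classical
  let π : Equiv.Perm α := e.toEquiv.subtypeCongr f.toEquiv
  have hπA (x : A) : π x = e x := by
    simp [π, Equiv.subtypeCongr]
  have hπAc (x : ↥Aᶜ) : π x = f x := by
    simp [π, Equiv.subtypeCongr, Equiv.sumCompl_symm_apply_of_neg x.2]
  refine ⟨π, ?_, fun x hx y hy hxy => ?_, fun x hx y hy hxy => ?_⟩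
  · calc π '' A = Set.range fun x : A => π x := Set.image_eq_range π A
      _ = Set.range fun x : A => (e x : α) := by simp only [hπA]
      _ = B := by rw [← Function.comp_def, e.surjective.range_comp, Subtype.range_coe]
  · rw [hπA ⟨x, hx⟩, hπA ⟨y, hy⟩]
    exact e.monotone hxy
  · rw [hπAc ⟨x, hx⟩, hπAc ⟨y, hy⟩]
    exact f.monotone hxy

lemma nonempty_orderIso_of_infinite {A B : Set ℕ} (hA : A.Infinite) (hB : B.Infinite) :
    Nonempty (A ≃o B) := by
  have := hA.to_subtype
  have := hB.to_subtype
  classical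
  exact ⟨(Nat.Subtype.orderIsoOfNat A).symm.trans (Nat.Subtype.orderIsoOfNat B)⟩

lemma AsympEqual.exists_inLevyGroup_image_eq {A B : Set ℕ} (h : AsympEqual A B)
    (hA : A.Infinite) (hAc : Aᶜ.Infinite) (hB : B.Infinite) (hBc : Bᶜ.Infinite) :
    ∃ π : Equiv.Perm ℕ, InLevyGroup π ∧ π '' A = B := by
  obtain ⟨e⟩ := nonempty_orderIso_of_infinite hA hB
  obtain ⟨f⟩ := nonempty_orderIso_of_infinite hAc hBc
  obtain ⟨π, rfl, hπA, hπAc⟩ := exists_perm_image_eq_monotoneOn e f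
  refine ⟨π, inLevyGroup_iff_isLittleO.mpr ?_, rfl⟩
  refine (Asymptotics.IsBigO.of_norm_le fun n => ?_).trans_isLittleO
    ((h.norm_left.const_mul_left 2).add (isLittleO_const_natCast 2))
  rw [Real.norm_natCast]
  exact ncard_crossing_le hπA hπAc n

namespace IsFAMeasure

variable {μ : Set ℕ → ℝ} {A B : Set ℕ}

lemma union (hμ : IsFAMeasure μ) (hAB : Disjoint A B) : μ (A ∪ B) = μ A + μ B :=
  hμ.2.2.2 A B hAB

lemma add_sdiff (hμ : IsFAMeasure μ) (h : A ⊆ B) : μ A + μ (B \ A) = μ B := by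
  rw [← hμ.union Set.disjoint_sdiff_right, Set.union_sdiff_cancel h]

lemma add_compl (hμ : IsFAMeasure μ) (A : Set ℕ) : μ A + μ Aᶜ = 1 := by
  rw [Set.compl_eq_univ_sdiff, hμ.add_sdiff (Set.subset_univ A), hμ.2.2.1]

lemma inter_add_sdiff (hμ : IsFAMeasure μ) (A B : Set ℕ) : μ (A ∩ B) + μ (A \ B) = μ A := by
  rw [← Set.sdiff_self_inter, hμ.add_sdiff Set.inter_subset_left]

lemma mono (hμ : IsFAMeasure μ) (h : A ⊆ B) : μ A ≤ μ B := by
  linarith [hμ.add_sdiff h, hμ.1 (B \ A)]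

end IsFAMeasure

namespace IsDensityMeasure

variable {μ : Set ℕ → ℝ} {A B : Set ℕ}

lemma eq_of_asympEqual_of_disjoint (hμ : IsDensityMeasure μ) (h : AsympEqual A B)
    (hAB : Disjoint A B) : μ A = μ B := by
  obtain ⟨T, hT, hAT, hBT⟩ := h.exists_hasDensity_half_union hAB
  obtain ⟨hdA, hdB⟩ := Set.disjoint_union_left.mp hT
  have hsum : μ A + μ T = μ B + μ T := by
    rw [← hμ.1.union hdA, ← hμ.1.union hdB, hμ.2 _ _ hAT, hμ.2 _ _ hBT]
  exact add_right_cancel hsum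

lemma eq_of_asympEqual (hμ : IsDensityMeasure μ) (h : AsympEqual A B) : μ A = μ B := by
  rw [← hμ.1.inter_add_sdiff A B, ← hμ.1.inter_add_sdiff B A, Set.inter_comm B A,
    hμ.eq_of_asympEqual_of_disjoint h.sdiff disjoint_sdiff_sdiff]

end IsDensityMeasure

/-- Invariance of a set function under the Lévy group. -/
def LevyInvariant (μ : Set ℕ → ℝ) : Prop :=
  ∀ (A : Set ℕ) (π : Equiv.Perm ℕ), InLevyGroup π → μ A = μ (π '' A)

namespace LevyInvariant

variable {μ : Set ℕ → ℝ} {A B C : Set ℕ} {a c : ℝ}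

lemma eq_of_hasDensity (hinv : LevyInvariant μ) (hA : HasDensity A a) (hB : HasDensity B a)
    (ha0 : 0 < a) (ha1 : a < 1) : μ A = μ B := by
  have hac : 1 - a ≠ 0 := (sub_pos.mpr ha1).ne'
  obtain ⟨π, hπ, rfl⟩ := (hA.asympEqual hB).exists_inLevyGroup_image_eq (hA.infinite ha0.ne')
    (hA.compl.infinite hac) (hB.infinite ha0.ne') (hB.compl.infinite hac)
  exact hinv A π hπ

lemma eq_natCast_mul_of_hasDensity (hinv : LevyInvariant μ) (hμ : IsFAMeasure μ)
    (hC : HasDensity C c) (hc : 0 < c) {j : ℕ} (hj : 1 ≤ j) (hjc : j * c < 1)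
    (hA : HasDensity A (j * c)) :
    μ A = j * μ C := by
  induction j, hj using Nat.le_induction generalizing A with
  | base =>
    rw [Nat.cast_one, one_mul] at hA hjc ⊢
    exact hinv.eq_of_hasDensity hA hC hc hjc
  | succ j hj ih =>
    have hj0 : 0 ≤ j * c := by positivity
    rw [Nat.cast_add_one, add_one_mul] at hA hjc ⊢
    obtain ⟨T, hTA, hT⟩ := hA.exists_subset hj0 (le_add_of_nonneg_right hc.le)
    have hdiff : HasDensity (A \ T) c := by
      simpa only [add_sub_cancel_left] using hA.sdiff hT hTA
    rw [← hμ.add_sdiff hTA, ih (by linarith) hT,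
      hinv.eq_of_hasDensity hdiff hC hc (by linarith)]

lemma eq_inv_natCast_of_hasDensity (hinv : LevyInvariant μ) (hμ : IsFAMeasure μ) {N : ℕ}
    (hN : 2 ≤ N) (hC : HasDensity C (N : ℝ)⁻¹) : μ C = (N : ℝ)⁻¹ := by
  have hN0 : (0 : ℝ) < N := by positivity
  have hpred : ((N - 1 : ℕ) : ℝ) = N - 1 := Nat.cast_pred (by lia)
  have hmul : ((N - 1 : ℕ) : ℝ) * (N : ℝ)⁻¹ = 1 - (N : ℝ)⁻¹ := by
    rw [hpred, sub_one_mul, mul_inv_cancel₀ hN0.ne']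
  have hlt : ((N - 1 : ℕ) : ℝ) * (N : ℝ)⁻¹ < 1 := hmul ▸ sub_lt_self 1 (inv_pos.mpr hN0)
  have hcompl : μ Cᶜ = (N - 1 : ℕ) * μ C :=
    hinv.eq_natCast_mul_of_hasDensity hμ hC (inv_pos.mpr hN0) (by lia) hlt (hmul ▸ hC.compl)
  rw [hpred] at hcompl
  exact eq_inv_of_mul_eq_one_right (by linear_combination hμ.add_compl C - hcompl)

lemma eq_nnratCast_of_hasDensity (hinv : LevyInvariant μ) (hμ : IsFAMeasure μ) {q : ℚ≥0}
    (hq0 : 0 < q) (hq1 : q < 1) (hA : HasDensity A q) : μ A = q := by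
  have hnum : 1 ≤ q.num := NNRat.num_pos.mpr hq0
  have hden : q.num < q.den := mod_cast Rat.num_lt_denom_iff.mpr (show (q : ℚ) < 1 from hq1)
  have hden2 : (2 : ℝ) ≤ q.den := by exact_mod_cast (by lia : 2 ≤ q.den)
  have hq : (q : ℝ) = q.num * (q.den : ℝ)⁻¹ := by rw [NNRat.cast_def, div_eq_mul_inv]
  obtain ⟨C, -, hC⟩ := hasDensity_univ.exists_subset (b := (q.den : ℝ)⁻¹) (by positivity)
    (inv_le_one_of_one_le₀ (by linarith))
  have hlt : q.num * (q.den : ℝ)⁻¹ < 1 := hq ▸ mod_cast hq1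
  rw [hq] at hA ⊢
  rw [hinv.eq_natCast_mul_of_hasDensity hμ hC (by positivity) hnum hlt hA,
    hinv.eq_inv_natCast_of_hasDensity hμ (by lia) hC]

lemma le_of_hasDensity (hinv : LevyInvariant μ) (hμ : IsFAMeasure μ) (hA : HasDensity A a) :
    μ A ≤ a := by
  by_contra! hlt
  obtain ⟨q, haq, hqμ⟩ := exists_rat_btwn hlt
  have hq0 : (0 : ℝ) < q := hA.nonneg.trans_lt haq
  lift q to ℚ≥0 using mod_cast hq0.le
  rw [Rat.cast_nnratCast] at hq0 haq hqμ
  have hq1 : (q : ℝ) < 1 := hqμ.trans_le (hμ.2.1 A)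
  obtain ⟨B, hAB, hB⟩ := hA.exists_superset haq.le hq1.le
  have hμB : μ B = q := hinv.eq_nnratCast_of_hasDensity hμ (mod_cast hq0) (mod_cast hq1) hB
  linarith [hμ.mono hAB]

end LevyInvariant

/-- A finitely additive measure `μ` on `ℕ` is a density measure iff it is
invariant under the Lévy group. -/
theorem isDensityMeasure_iff_levyGroup_invariant
    (μ : Set ℕ → ℝ) (hμ : IsFAMeasure μ) :
    IsDensityMeasure μ ↔
      ∀ (A : Set ℕ) (π : Equiv.Perm ℕ), InLevyGroup π → μ A = μ (π '' A) := by
  refine ⟨fun h A π hπ => h.eq_of_asympEqual (hπ.asympEqual_image A),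
    fun h => ⟨hμ, fun A a hA => ?_⟩⟩
  have hinv : LevyInvariant μ := h
  have hAc : μ Aᶜ ≤ 1 - a := hinv.le_of_hasDensity hμ hA.compl
  exact (hinv.le_of_hasDensity hμ hA).antisymm (by linarith [hμ.add_compl A])
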